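/- Assume the kernel K satisfies Assumption (K) with exponent γ ∈ (0,2] and that the coefficients b, σ have linear growth uniformly in time. Fix N > 0. Then the set of all continuous paths φ : [0,T] → ℝᵈ that solve the controlled Volterra equation for some control v ∈ L²([0,T];ℝᵐ) with ∫₀ᵀ |v_s|² ds ≤ N is relatively compact in C([0,T];ℝᵈ) equipped with the supremum norm. -/

import Mathlib

/-!
The set is shown to be uniformly bounded and equicontinuous, and Arzelà–Ascoli applies
(`isCompact_closure_of_modulus`).

*Uniform bound* (`exists_solution_bound`). Linear growth gives, for `f = 1 + |φ|` and
`p = 1 + |v|`, the inequality `f t ≤ A + B ∫₀ᵗ |K (t - s)| f s p s ds`. After multiplication by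
`e^{-lt}`, Cauchy–Schwarz bounds the integral term by
`B ‖e^{-l·} K‖_{L²} ‖p‖_{L²} sup (e^{-l·} f)`. Here `‖p‖_{L²}² ≤ 2T + 2N`, and `l` can be chosen,
independently of the solution, so that the prefactor is at most `1/2`. The supremum is finite by
continuity of `φ`, so it is absorbed into the left-hand side (`exists_apriori_bound`).

*Equicontinuity* (`solution_modulus`). The forcing `u = b(·, φ) + σ(·, φ) v` is then bounded in
`L²`, uniformly over all solutions, and `φ = x₀ + K * u` once `K` and `u` are extended by zero
outside `[0,T]`. Hence `|φ t - φ t'|` is at most a constant times the `L²`-distance between the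
translates of `K` by `t` and `t'`, which tends to zero as `t → t'` because translations act
continuously on `L²(ℝ)` (`tendsto_sqrt_integral_sub_translate`).
-/


open MeasureTheory Set

/-- Frobenius norm of a real matrix. -/
noncomputable def frobNorm {n m : ℕ} (A : Matrix (Fin n) (Fin m) ℝ) : ℝ :=
  Real.sqrt (∑ i, ∑ j, (A i j) ^ 2)

/-- Euclidean norm of a vector in `ℝⁿ`. -/
noncomputable def euclNorm {n : ℕ} (x : Fin n → ℝ) : ℝ :=
  Real.sqrt (∑ i, x i ^ 2)

/-- Assumption (K): the kernel is square integrable on `[0,T]` and there are constants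
`C_K > 0` and `h₀ ∈ (0,1]` such that
`∫₀ʰ |K(t)|² dt + ∫₀ᵀ |K(t+h) - K(t)|² dt ≤ C_K h^γ` for all `h ∈ (0,h₀]`. -/
def AssumptionK {d : ℕ} (T γ : ℝ) (K : ℝ → Matrix (Fin d) (Fin d) ℝ) : Prop :=
  MeasureTheory.IntegrableOn (fun t => frobNorm (K t) ^ 2) (Set.Ioc 0 T) ∧
  ∃ C_K > (0:ℝ), ∃ h₀ ∈ Set.Ioc (0:ℝ) 1, ∀ h ∈ Set.Ioc (0:ℝ) h₀,
    (∫ t in Set.Ioc 0 h, frobNorm (K t) ^ 2) +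
        (∫ t in Set.Ioc 0 T, frobNorm (K (t + h) - K t) ^ 2) ≤ C_K * h ^ γ

/-- A continuous path `φ` is a solution of the controlled Volterra equation
`φ t = x₀ + ∫₀ᵗ K(t-s)[b(s,φ s) + σ(s,φ s) v s] ds` on `[0,T]`. -/
def IsCtrlSol {d m : ℕ} (T : ℝ) (K : ℝ → Matrix (Fin d) (Fin d) ℝ)
    (x₀ : Fin d → ℝ) (b : ℝ → (Fin d → ℝ) → Fin d → ℝ)
    (σ : ℝ → (Fin d → ℝ) → Matrix (Fin d) (Fin m) ℝ)
    (v : ℝ → Fin m → ℝ) (φ : ℝ → Fin d → ℝ) : Prop :=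
  ContinuousOn φ (Set.Icc 0 T) ∧
  ∀ t ∈ Set.Icc (0:ℝ) T,
    MeasureTheory.IntegrableOn
      (fun s => (K (t - s)).mulVec (b s (φ s) + (σ s (φ s)).mulVec (v s)))
      (Set.Ioc 0 t) ∧
    φ t = x₀ + ∫ s in Set.Ioc 0 t,
      (K (t - s)).mulVec (b s (φ s) + (σ s (φ s)).mulVec (v s))

open Filter Topology

/-! ### Square-integrable functions on the line -/

lemma abs_integral_mul_le_sqrt {f g : ℝ → ℝ} (hf : MemLp f 2 volume) (hg : MemLp g 2 volume) :
    |∫ s, f s * g s| ≤ √(∫ s, f s ^ 2) * √(∫ s, g s ^ 2) := by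
  have h2 : ENNReal.ofReal 2 = 2 := by simp
  have h := integral_mul_norm_le_Lp_mul_Lq (μ := volume) (f := f) (g := g)
    Real.HolderConjugate.two_two (by rwa [h2]) (by rwa [h2])
  simp only [Real.norm_eq_abs, Real.rpow_two, sq_abs, ← Real.sqrt_eq_rpow] at h
  refine (abs_integral_le_integral_abs).trans ?_
  simpa only [abs_mul] using h

/-- Translations act continuously on `L²(ℝ)`: this is continuity of composition with the
measure-preserving maps `s ↦ t - s`. -/
lemma tendsto_sqrt_integral_sub_translate {k : ℝ → ℝ} (hk : MemLp k 2 volume) (t₀ : ℝ) :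
    Tendsto (fun t => √(∫ s, (k (t - s) - k (t₀ - s)) ^ 2)) (𝓝 t₀) (𝓝 0) := by
  let g : ℝ → C(ℝ, ℝ) := fun t => ⟨fun s => t - s, by fun_prop⟩
  have hg : Continuous g := by
    apply ContinuousMap.continuous_of_continuous_uncurry
    show Continuous fun p : ℝ × ℝ => p.1 - p.2
    fun_prop
  have hgm : ∀ t, MeasurePreserving (g t) volume volume := fun t =>
    volume.measurePreserving_sub_left t
  have hcont : Continuous fun t => Lp.compMeasurePreserving (g t) (hgm t) (hk.toLp k) :=
    Continuous.compMeasurePreservingLp continuous_const hg hgm (by simp)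
  have h0 : Tendsto (fun t => ‖Lp.compMeasurePreserving (g t) (hgm t) (hk.toLp k) -
      Lp.compMeasurePreserving (g t₀) (hgm t₀) (hk.toLp k)‖) (𝓝 t₀) (𝓝 0) := by
    have := ((hcont.sub continuous_const).norm).tendsto (x := t₀)
      (f := fun t => ‖Lp.compMeasurePreserving (g t) (hgm t) (hk.toLp k) -
      Lp.compMeasurePreserving (g t₀) (hgm t₀) (hk.toLp k)‖)
    simpa using this
  refine h0.congr fun t => ?_
  rw [Lp.toLp_compMeasurePreserving, Lp.toLp_compMeasurePreserving, ← MemLp.toLp_sub,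
    Lp.norm_toLp, MemLp.eLpNorm_eq_integral_rpow_norm (by simp) (by simp)
      ((hk.comp_measurePreserving (hgm t)).sub (hk.comp_measurePreserving (hgm t₀))),
    ENNReal.toReal_ofReal (by positivity)]
  simp [g, Real.sqrt_eq_rpow]

/-- The weight `e^{-ls}` makes the `L²`-norm of a kernel supported on `[0,∞)` as small as desired,
by dominated convergence as `l → ∞`. -/
lemma exists_exp_weight {κ : ℝ → ℝ} (hκ : MemLp κ 2 volume) (hneg : ∀ s < 0, κ s = 0)
    {ε : ℝ} (hε : 0 < ε) :
    ∃ l : ℝ, 0 ≤ l ∧ MemLp (fun s => Real.exp (-(l * s)) * κ s) 2 volume ∧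
      √(∫ s, (Real.exp (-(l * s)) * κ s) ^ 2) ≤ ε := by
  have hint := (memLp_two_iff_integrable_sq hκ.1).1 hκ
  have hbd : ∀ l : ℝ, 0 ≤ l → ∀ s, |Real.exp (-(l * s)) * κ s| ≤ |κ s| := by
    intro l hl s
    rcases lt_or_ge s 0 with hs | hs
    · simp [hneg s hs]
    · rw [abs_mul, abs_of_pos (Real.exp_pos _)]
      exact mul_le_of_le_one_left (abs_nonneg _) (Real.exp_le_one_iff.2 (by nlinarith))
  have hm : ∀ l : ℝ, AEStronglyMeasurable (fun s => Real.exp (-(l * s)) * κ s) volume := fun l =>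
    (Continuous.aestronglyMeasurable (by fun_prop)).mul hκ.1
  have hlim : Tendsto (fun n : ℕ => ∫ s, (Real.exp (-((n : ℝ) * s)) * κ s) ^ 2) atTop
      (𝓝 (∫ _ : ℝ, (0 : ℝ))) := by
    refine tendsto_integral_of_dominated_convergence (fun s => κ s ^ 2)
      (fun n => (hm n).pow 2) hint (fun n => Eventually.of_forall fun s => ?_) ?_
    · rw [Real.norm_eq_abs, abs_pow, ← sq_abs (κ s)]
      exact pow_le_pow_left₀ (abs_nonneg _) (hbd n (Nat.cast_nonneg n) s) 2
    · have h0 : ∀ᵐ s : ℝ, s ≠ 0 := by simp [ae_iff]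
      filter_upwards [h0] with s hs
      rcases lt_or_gt_of_ne hs with hs | hs
      · simp [hneg s hs]
      · have : Tendsto (fun n : ℕ => Real.exp (-((n : ℝ) * s))) atTop (𝓝 0) :=
          Real.tendsto_exp_neg_atTop_nhds_zero.comp
            (tendsto_natCast_atTop_atTop.atTop_mul_const hs)
        simpa using (this.mul_const (κ s)).pow 2
  rw [integral_zero] at hlim
  have hs := (hlim.sqrt).eventually_le_const (u := ε) (by simpa using hε)
  obtain ⟨n, hn⟩ := hs.exists
  exact ⟨n, Nat.cast_nonneg n, hκ.of_le (hm n) (Eventually.of_forall fun s => by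
    simpa only [Real.norm_eq_abs] using hbd n (Nat.cast_nonneg n) s), hn⟩

/-- A Grönwall inequality for a square-integrable convolution kernel. The bound `R` depends on `p`
only through its `L²`-norm and not on `f`, which gives uniformity over all solutions. -/
lemma exists_apriori_bound {T : ℝ} (hT : 0 ≤ T) {κ : ℝ → ℝ} (hκ : MemLp κ 2 volume)
    (hneg : ∀ s < 0, κ s = 0) (hκ0 : ∀ s, 0 ≤ κ s) (A B P : ℝ) (hB : 0 ≤ B) :
    ∃ R : ℝ, ∀ f p : ℝ → ℝ, ContinuousOn f (Icc 0 T) → (∀ s, 0 ≤ f s) → (∀ s, 0 ≤ p s) →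
      MemLp p 2 volume → √(∫ s, p s ^ 2) ≤ P →
      (∀ t ∈ Icc 0 T, f t ≤ A + B * ∫ s in Ioc 0 t, κ (t - s) * (f s * p s)) →
      ∀ t ∈ Icc 0 T, f t ≤ R := by
  -- With this `ε`, the integral term is a contraction by `1 / 2` in the norm `sup e^{-lt} |f t|`.
  obtain ⟨l, hl, hE, hEε⟩ := exists_exp_weight hκ hneg
    (ε := 1 / (2 * (B * |P| + 1))) (by positivity)
  set E : ℝ → ℝ := fun s => Real.exp (-(l * s)) * κ s with hEdef
  have hE0 : ∀ s, 0 ≤ E s := fun s => mul_nonneg (Real.exp_pos _).le (hκ0 s)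
  refine ⟨2 * |A| * Real.exp (l * T), fun f p hf hf0 hp0 hp hpP hle t ht => ?_⟩
  obtain ⟨r, hr, hmax⟩ := isCompact_Icc.exists_isMaxOn (nonempty_Icc.2 hT)
    (f := fun t => Real.exp (-(l * t)) * f t) (by fun_prop)
  set G := Real.exp (-(l * r)) * f r with hG
  have hG0 : 0 ≤ G := mul_nonneg (Real.exp_pos _).le (hf0 r)
  have hfG : ∀ s ∈ Icc 0 T, f s ≤ G * Real.exp (l * s) := by
    intro s hs
    have h1 : Real.exp (-(l * s)) * f s ≤ G := hmax hs
    calc f s = (Real.exp (-(l * s)) * f s) * Real.exp (l * s) := by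
          rw [mul_right_comm, ← Real.exp_add]; simp
      _ ≤ _ := by gcongr
  have hEr : MemLp (fun s => E (r - s)) 2 volume :=
    hE.comp_measurePreserving (volume.measurePreserving_sub_left r)
  have hint : Integrable (fun s => E (r - s) * p s) := hEr.integrable_mul hp
  have hCS : ∫ s, E (r - s) * p s ≤ 1 / (2 * (B * |P| + 1)) * |P| := by
    refine (le_abs_self _).trans ((abs_integral_mul_le_sqrt hEr hp).trans ?_)
    rw [integral_sub_left_eq_self (fun s => E s ^ 2) volume r]
    gcongr
    exact hpP.trans (le_abs_self P)
  have hI : ∫ s in Ioc 0 r, κ (r - s) * (f s * p s) ≤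
      G * Real.exp (l * r) * ∫ s, E (r - s) * p s := by
    calc ∫ s in Ioc 0 r, κ (r - s) * (f s * p s)
        ≤ ∫ s in Ioc 0 r, G * Real.exp (l * r) * (E (r - s) * p s) := by
          refine integral_mono_of_nonneg (Eventually.of_forall fun s =>
            mul_nonneg (hκ0 _) (mul_nonneg (hf0 s) (hp0 s)))
            (hint.const_mul _).integrableOn ?_
          filter_upwards [ae_restrict_mem measurableSet_Ioc] with s hs
          have h1 := hfG s ⟨hs.1.le, hs.2.trans hr.2⟩
          have h2 : Real.exp (l * r) * Real.exp (-(l * (r - s))) = Real.exp (l * s) := by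
            rw [← Real.exp_add]; ring_nf
          calc κ (r - s) * (f s * p s) ≤ κ (r - s) * ((G * Real.exp (l * s)) * p s) := by
                have := hκ0 (r - s)
                have := hp0 s
                gcongr
            _ = _ := by rw [← h2]; simp only [hEdef]; ring
      _ ≤ ∫ s, G * Real.exp (l * r) * (E (r - s) * p s) :=
          setIntegral_le_integral (hint.const_mul _) (Eventually.of_forall fun s =>
            mul_nonneg (by positivity) (mul_nonneg (hE0 _) (hp0 s)))
      _ = _ := integral_const_mul _ _
  have hBP : B * (1 / (2 * (B * |P| + 1)) * |P|) ≤ 1 / 2 := by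
    have : 0 ≤ B * |P| := by positivity
    rw [show B * (1 / (2 * (B * |P| + 1)) * |P|) = (B * |P|) / (2 * (B * |P| + 1)) by ring,
      div_le_iff₀ (by positivity)]
    linarith
  have hGle : G ≤ |A| + G / 2 := by
    have h1 : f r ≤ |A| + G * Real.exp (l * r) * (1 / 2) := by
      calc f r ≤ A + B * ∫ s in Ioc 0 r, κ (r - s) * (f s * p s) := hle r hr
        _ ≤ |A| + B * (G * Real.exp (l * r) * (1 / (2 * (B * |P| + 1)) * |P|)) := by
            gcongr
            · exact le_abs_self A
            · exact hI.trans (by gcongr)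
        _ = |A| + G * Real.exp (l * r) * (B * (1 / (2 * (B * |P| + 1)) * |P|)) := by ring
        _ ≤ _ := by gcongr
    have h2 : Real.exp (-(l * r)) ≤ 1 := Real.exp_le_one_iff.2 (by nlinarith [hr.1])
    calc G ≤ Real.exp (-(l * r)) * (|A| + G * Real.exp (l * r) * (1 / 2)) := by
          rw [hG]; gcongr
      _ = Real.exp (-(l * r)) * |A| + G / 2 * (Real.exp (-(l * r)) * Real.exp (l * r)) := by ring
      _ ≤ 1 * |A| + G / 2 * 1 := by
          rw [← Real.exp_add]; gcongr; simp
      _ = _ := by ring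
  calc f t ≤ G * Real.exp (l * t) := hfG t ht
    _ ≤ 2 * |A| * Real.exp (l * T) := by
      gcongr
      · linarith
      · exact ht.2

/-! ### Euclidean and Frobenius norms -/

lemma euclNorm_nonneg {n : ℕ} (x : Fin n → ℝ) : 0 ≤ euclNorm x := Real.sqrt_nonneg _

lemma frobNorm_nonneg {n m : ℕ} (A : Matrix (Fin n) (Fin m) ℝ) : 0 ≤ frobNorm A :=
  Real.sqrt_nonneg _

lemma euclNorm_eq_norm {n : ℕ} (x : Fin n → ℝ) : euclNorm x = ‖WithLp.toLp 2 x‖ := by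
  simp [euclNorm, EuclideanSpace.norm_eq]

lemma euclNorm_add_le {n : ℕ} (x y : Fin n → ℝ) : euclNorm (x + y) ≤ euclNorm x + euclNorm y := by
  simp only [euclNorm_eq_norm, WithLp.toLp_add]
  exact norm_add_le _ _

lemma abs_le_euclNorm {n : ℕ} (x : Fin n → ℝ) (i : Fin n) : |x i| ≤ euclNorm x := by
  refine Real.abs_le_sqrt ?_
  exact Finset.single_le_sum (f := fun i => x i ^ 2) (fun i _ => sq_nonneg _) (Finset.mem_univ i)

lemma norm_le_euclNorm {n : ℕ} (x : Fin n → ℝ) : ‖x‖ ≤ euclNorm x :=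
  (pi_norm_le_iff_of_nonneg (euclNorm_nonneg x)).2 (abs_le_euclNorm x)

lemma euclNorm_le_sqrt_mul_norm {n : ℕ} (x : Fin n → ℝ) : euclNorm x ≤ √n * ‖x‖ := by
  refine Real.sqrt_le_iff.2 ⟨by positivity, ?_⟩
  rw [mul_pow, Real.sq_sqrt (Nat.cast_nonneg n)]
  calc ∑ i, x i ^ 2 ≤ ∑ _i : Fin n, ‖x‖ ^ 2 :=
        Finset.sum_le_sum fun i _ => by
          rw [← sq_abs]
          exact pow_le_pow_left₀ (abs_nonneg _) (norm_le_pi_norm x i) 2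
    _ = _ := by simp

lemma continuous_euclNorm {n : ℕ} : Continuous (euclNorm : (Fin n → ℝ) → ℝ) := by
  unfold euclNorm; fun_prop

lemma abs_le_frobNorm {n m : ℕ} (A : Matrix (Fin n) (Fin m) ℝ) (i : Fin n) (j : Fin m) :
    |A i j| ≤ frobNorm A := by
  refine Real.abs_le_sqrt ?_
  calc A i j ^ 2 ≤ ∑ j, A i j ^ 2 :=
        Finset.single_le_sum (f := fun j => A i j ^ 2) (fun j _ => sq_nonneg _) (Finset.mem_univ j)
    _ ≤ _ := Finset.single_le_sum (f := fun i => ∑ j, A i j ^ 2)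
        (fun i _ => Finset.sum_nonneg fun j _ => sq_nonneg _) (Finset.mem_univ i)

lemma euclNorm_mulVec_le {n m : ℕ} (A : Matrix (Fin n) (Fin m) ℝ) (x : Fin m → ℝ) :
    euclNorm (A.mulVec x) ≤ frobNorm A * euclNorm x := by
  rw [euclNorm, frobNorm, euclNorm, ← Real.sqrt_mul (by positivity)]
  refine Real.sqrt_le_sqrt ?_
  rw [Finset.sum_mul]
  exact Finset.sum_le_sum fun i _ =>
    Finset.sum_mul_sq_le_sq_mul_sq Finset.univ (fun j => A i j) x

/-- Linear growth bounds the forcing term `b + σ v` by a product in which the path and the control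
are separated. -/
lemma forcing_le {d m : ℕ} {b : Fin d → ℝ} {σ : Matrix (Fin d) (Fin m) ℝ} {x : Fin d → ℝ}
    {C : ℝ} (h : euclNorm b + frobNorm σ ≤ C * (1 + euclNorm x)) (v : Fin m → ℝ) :
    euclNorm (b + σ.mulVec v) ≤ C * ((1 + euclNorm x) * (1 + euclNorm v)) := by
  have h1 := euclNorm_add_le b (σ.mulVec v)
  have h2 := euclNorm_mulVec_le σ v
  have := euclNorm_nonneg b
  have := frobNorm_nonneg σ
  have := euclNorm_nonneg v
  nlinarith

/-! ### The kernel and the control cut off to `[0,T]` -/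

lemma kernelNorm_memLp {d : ℕ} {T : ℝ} {K : ℝ → Matrix (Fin d) (Fin d) ℝ}
    (hKmeas : ∀ i j, Measurable fun t => K t i j)
    (hK : IntegrableOn (fun t => frobNorm (K t) ^ 2) (Ioc 0 T)) :
    MemLp ((Icc 0 T).indicator fun t => frobNorm (K t)) 2 volume := by
  have hm : Measurable fun t => frobNorm (K t) := by unfold frobNorm; fun_prop
  rw [memLp_indicator_iff_restrict measurableSet_Icc,
    memLp_two_iff_integrable_sq hm.aestronglyMeasurable]
  exact (integrableOn_Icc_iff_integrableOn_Ioc (by simp)).2 hK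

lemma kernelEntry_memLp {d : ℕ} {T : ℝ} {K : ℝ → Matrix (Fin d) (Fin d) ℝ}
    (hKmeas : ∀ i j, Measurable fun t => K t i j)
    (hK : IntegrableOn (fun t => frobNorm (K t) ^ 2) (Ioc 0 T)) (i j : Fin d) :
    MemLp ((Icc 0 T).indicator fun t => K t i j) 2 volume := by
  refine (kernelNorm_memLp hKmeas hK).of_le
    ((hKmeas i j).indicator measurableSet_Icc).aestronglyMeasurable (Eventually.of_forall fun t => ?_)
  by_cases ht : t ∈ Icc 0 T
  · simp only [indicator_of_mem ht, Real.norm_eq_abs]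
    exact (abs_le_frobNorm _ i j).trans (le_abs_self _)
  · simp [indicator_of_notMem ht]

/-- `1 + |v|` cut off to `(0,T]`. -/
noncomputable def ctrlWeight {m : ℕ} (T : ℝ) (v : ℝ → Fin m → ℝ) : ℝ → ℝ :=
  (Ioc 0 T).indicator fun s => 1 + euclNorm (v s)

lemma ctrlWeight_nonneg {m : ℕ} (T : ℝ) (v : ℝ → Fin m → ℝ) (s : ℝ) : 0 ≤ ctrlWeight T v s :=
  indicator_nonneg (fun s _ => by have := euclNorm_nonneg (v s); positivity) s

lemma ctrlWeight_memLp_and_le {m : ℕ} {T N : ℝ} (hT : 0 ≤ T) {v : ℝ → Fin m → ℝ} (hv : Measurable v)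
    (hvi : IntegrableOn (fun s => euclNorm (v s) ^ 2) (Ioc 0 T))
    (hvN : (∫ s in Ioc 0 T, euclNorm (v s) ^ 2) ≤ N) :
    MemLp (ctrlWeight T v) 2 volume ∧ √(∫ s, ctrlWeight T v s ^ 2) ≤ √(2 * T + 2 * N) := by
  have hm : Measurable fun s => euclNorm (v s) := continuous_euclNorm.measurable.comp hv
  have hv2 : MemLp (fun s => euclNorm (v s)) 2 (volume.restrict (Ioc 0 T)) :=
    (memLp_two_iff_integrable_sq hm.aestronglyMeasurable).2 hvi
  have h1 : MemLp (fun s => 1 + euclNorm (v s)) 2 (volume.restrict (Ioc 0 T)) :=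
    (memLp_const (1 : ℝ)).add hv2
  refine ⟨(memLp_indicator_iff_restrict measurableSet_Ioc).2 h1, Real.sqrt_le_sqrt ?_⟩
  have h2 : (fun s => ctrlWeight T v s ^ 2) =
      (Ioc 0 T).indicator fun s => (1 + euclNorm (v s)) ^ 2 := by
    ext s
    by_cases hs : s ∈ Ioc 0 T <;> simp [ctrlWeight, hs]
  rw [h2, integral_indicator measurableSet_Ioc]
  have hc : Integrable (fun _ : ℝ => (2 : ℝ)) (volume.restrict (Ioc 0 T)) := integrable_const _
  calc ∫ s in Ioc 0 T, (1 + euclNorm (v s)) ^ 2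
      ≤ ∫ s in Ioc 0 T, (2 + 2 * euclNorm (v s) ^ 2) := by
        refine integral_mono h1.integrable_sq (hc.add (hvi.const_mul 2)) fun s => ?_
        show (1 + euclNorm (v s)) ^ 2 ≤ 2 + 2 * euclNorm (v s) ^ 2
        nlinarith [sq_nonneg (1 - euclNorm (v s))]
    _ = 2 * T + 2 * ∫ s in Ioc 0 T, euclNorm (v s) ^ 2 := by
        rw [integral_add hc (hvi.const_mul 2), integral_const_mul]
        simp [hT, mul_comm]
    _ ≤ _ := by gcongr

/-! ### Uniform estimates for solutions -/

/-- A priori bound, uniform over all solutions driven by controls of energy at most `N`. -/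
lemma exists_solution_bound {d m : ℕ} {T : ℝ} (hT : 0 ≤ T)
    {K : ℝ → Matrix (Fin d) (Fin d) ℝ} (hKmeas : ∀ i j, Measurable fun t => K t i j)
    (hK : IntegrableOn (fun t => frobNorm (K t) ^ 2) (Ioc 0 T))
    (x₀ : Fin d → ℝ) {b : ℝ → (Fin d → ℝ) → Fin d → ℝ}
    {σ : ℝ → (Fin d → ℝ) → Matrix (Fin d) (Fin m) ℝ} {C_L : ℝ} (hCL : 0 ≤ C_L)
    (hgrowth : ∀ t ∈ Icc (0:ℝ) T, ∀ x,
      euclNorm (b t x) + frobNorm (σ t x) ≤ C_L * (1 + euclNorm x)) (N : ℝ) :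
    ∃ R : ℝ, ∀ (φ : ℝ → Fin d → ℝ) (v : ℝ → Fin m → ℝ), Measurable v →
      IntegrableOn (fun s => euclNorm (v s) ^ 2) (Ioc 0 T) →
      (∫ s in Ioc 0 T, euclNorm (v s) ^ 2) ≤ N → IsCtrlSol T K x₀ b σ v φ →
      ∀ t ∈ Icc 0 T, 1 + euclNorm (φ t) ≤ R := by
  set κ : ℝ → ℝ := (Icc 0 T).indicator fun t => frobNorm (K t) with hκdef
  have hκ : MemLp κ 2 volume := kernelNorm_memLp hKmeas hK
  have hκ0 : ∀ s, 0 ≤ κ s := fun s => indicator_nonneg (fun s _ => frobNorm_nonneg _) s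
  have hκneg : ∀ s < 0, κ s = 0 := fun s hs =>
    indicator_of_notMem (fun h => absurd h.1 (not_le.2 hs)) _
  obtain ⟨R, hR⟩ := exists_apriori_bound hT hκ hκneg hκ0 (1 + √d * ‖x₀‖) (√d * C_L)
    (√(2 * T + 2 * N)) (by positivity)
  refine ⟨R, fun φ v hv hvi hvN hsol => ?_⟩
  obtain ⟨hp, hpP⟩ := ctrlWeight_memLp_and_le hT hv hvi hvN
  have hfc : ContinuousOn (fun t => 1 + euclNorm (φ t)) (Icc 0 T) :=
    continuousOn_const.add (continuous_euclNorm.comp_continuousOn hsol.1)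
  have hf0 : ∀ s, 0 ≤ 1 + euclNorm (φ s) := fun s => by have := euclNorm_nonneg (φ s); positivity
  refine hR (fun t => 1 + euclNorm (φ t)) (ctrlWeight T v) hfc hf0 (ctrlWeight_nonneg T v) hp hpP
    fun t ht => ?_
  -- `M` depends on `φ`; it serves only to show that the integrand is integrable.
  obtain ⟨M, hM⟩ := isCompact_Icc.exists_bound_of_continuousOn hfc
  have hsub : Ioc 0 t ⊆ Icc 0 T := fun s hs => ⟨hs.1.le, hs.2.trans ht.2⟩
  have hint : IntegrableOn (fun s => κ (t - s) * ((1 + euclNorm (φ s)) * ctrlWeight T v s))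
      (Ioc 0 t) := by
    have h1 : MemLp (fun s => (1 + euclNorm (φ s)) * ctrlWeight T v s) 2
        (volume.restrict (Ioc 0 t)) := by
      refine MemLp.of_le_mul (c := M) (hp.restrict _)
        (((hfc.mono hsub).aestronglyMeasurable measurableSet_Ioc).mul hp.1.restrict) ?_
      filter_upwards [ae_restrict_mem measurableSet_Ioc] with s hs
      rw [norm_mul]
      exact mul_le_mul_of_nonneg_right (hM s (hsub hs)) (norm_nonneg _)
    have h2 : MemLp (fun s => κ (t - s)) 2 (volume.restrict (Ioc 0 t)) :=
      (hκ.comp_measurePreserving (volume.measurePreserving_sub_left t)).restrict _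
    exact h2.integrable_mul h1
  have hbound : ‖∫ s in Ioc 0 t, (K (t - s)).mulVec (b s (φ s) + (σ s (φ s)).mulVec (v s))‖ ≤
      ∫ s in Ioc 0 t, C_L * (κ (t - s) * ((1 + euclNorm (φ s)) * ctrlWeight T v s)) := by
    refine norm_integral_le_of_norm_le (hint.const_mul C_L) ?_
    filter_upwards [ae_restrict_mem measurableSet_Ioc] with s hs
    have hk : κ (t - s) = frobNorm (K (t - s)) :=
      indicator_of_mem (show t - s ∈ Icc 0 T from
        ⟨by linarith [hs.2], by linarith [hs.1, ht.2]⟩) _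
    have hw : ctrlWeight T v s = 1 + euclNorm (v s) :=
      indicator_of_mem (show s ∈ Ioc 0 T from ⟨hs.1, hs.2.trans ht.2⟩) _
    rw [hk, hw]
    calc _ ≤ _ := norm_le_euclNorm _
      _ ≤ _ := euclNorm_mulVec_le _ _
      _ ≤ frobNorm (K (t - s)) * (C_L * ((1 + euclNorm (φ s)) * (1 + euclNorm (v s)))) :=
          mul_le_mul_of_nonneg_left (forcing_le (hgrowth s (hsub hs) _) _) (frobNorm_nonneg _)
      _ = _ := by ring
  rw [integral_const_mul] at hbound
  have hφ : ‖φ t‖ ≤ ‖x₀‖ + C_L * ∫ s in Ioc 0 t,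
      κ (t - s) * ((1 + euclNorm (φ s)) * ctrlWeight T v s) := by
    rw [(hsol.2 t ht).2]
    exact (norm_add_le _ _).trans (by gcongr)
  calc 1 + euclNorm (φ t) ≤ 1 + √d * ‖φ t‖ := by gcongr; exact euclNorm_le_sqrt_mul_norm _
    _ ≤ 1 + √d * (‖x₀‖ + C_L * ∫ s in Ioc 0 t,
      κ (t - s) * ((1 + euclNorm (φ s)) * ctrlWeight T v s)) := by gcongr
    _ = _ := by ring

/-- The `L²(ℝ)`-modulus of translation, summed over the entries of the kernel cut off to `[0,T]`. -/
noncomputable def kernelModulus {d : ℕ} (T : ℝ) (K : ℝ → Matrix (Fin d) (Fin d) ℝ) (t t' : ℝ) : ℝ :=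
  ∑ i, ∑ j, √(∫ s, ((Icc 0 T).indicator (fun r => K r i j) (t - s) -
    (Icc 0 T).indicator (fun r => K r i j) (t' - s)) ^ 2)

lemma tendsto_kernelModulus {d : ℕ} {T : ℝ} {K : ℝ → Matrix (Fin d) (Fin d) ℝ}
    (hKmeas : ∀ i j, Measurable fun t => K t i j)
    (hK : IntegrableOn (fun t => frobNorm (K t) ^ 2) (Ioc 0 T)) (t₀ : ℝ) :
    Tendsto (fun t => kernelModulus T K t t₀) (𝓝 t₀) (𝓝 0) := by
  have : Tendsto (fun t => kernelModulus T K t t₀) (𝓝 t₀)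
      (𝓝 (∑ _i : Fin d, ∑ _j : Fin d, (0 : ℝ))) :=
    tendsto_finsetSum _ fun i _ => tendsto_finsetSum _ fun j _ =>
      tendsto_sqrt_integral_sub_translate (kernelEntry_memLp hKmeas hK i j) t₀
  simpa using this

/-- A common modulus of continuity for solutions bounded by `R`. Each coordinate of `φ` is a sum of
convolutions of kernel entries with the components of the forcing, whose `L²`-norms are at most
`C_L R √(2T + 2N)`; Cauchy–Schwarz transfers the regularity of translations of `K` to `φ`. -/
lemma solution_modulus {d m : ℕ} {T : ℝ} (hT : 0 ≤ T)
    {K : ℝ → Matrix (Fin d) (Fin d) ℝ} (hKmeas : ∀ i j, Measurable fun t => K t i j)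
    (hK : IntegrableOn (fun t => frobNorm (K t) ^ 2) (Ioc 0 T))
    {x₀ : Fin d → ℝ} {b : ℝ → (Fin d → ℝ) → Fin d → ℝ}
    {σ : ℝ → (Fin d → ℝ) → Matrix (Fin d) (Fin m) ℝ}
    (hbmeas : Measurable (Function.uncurry b))
    (hσmeas : ∀ i j, Measurable fun p : ℝ × (Fin d → ℝ) => σ p.1 p.2 i j)
    {C_L : ℝ} (hCL : 0 ≤ C_L)
    (hgrowth : ∀ t ∈ Icc (0:ℝ) T, ∀ x,
      euclNorm (b t x) + frobNorm (σ t x) ≤ C_L * (1 + euclNorm x)) {N R : ℝ}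
    {φ : ℝ → Fin d → ℝ} {v : ℝ → Fin m → ℝ} (hv : Measurable v)
    (hvi : IntegrableOn (fun s => euclNorm (v s) ^ 2) (Ioc 0 T))
    (hvN : (∫ s in Ioc 0 T, euclNorm (v s) ^ 2) ≤ N) (hsol : IsCtrlSol T K x₀ b σ v φ)
    (hR : ∀ t ∈ Icc 0 T, 1 + euclNorm (φ t) ≤ R) {t t' : ℝ} (ht : t ∈ Icc 0 T)
    (ht' : t' ∈ Icc 0 T) :
    ‖φ t - φ t'‖ ≤ kernelModulus T K t t' * (C_L * R * √(2 * T + 2 * N)) := by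
  have hR0 : 0 ≤ R := by
    have := hR 0 ⟨le_rfl, hT⟩
    have := euclNorm_nonneg (φ 0)
    linarith
  obtain ⟨hp, hpP⟩ := ctrlWeight_memLp_and_le hT hv hvi hvN
  set u : ℝ → Fin d → ℝ := fun s => b s (φ s) + (σ s (φ s)).mulVec (v s) with hu
  set w : Fin d → ℝ → ℝ := fun j => (Ioc 0 T).indicator fun s => u s j with hw
  set k : Fin d → Fin d → ℝ → ℝ := fun i j => (Icc 0 T).indicator fun r => K r i j with hk
  have hkL : ∀ i j, MemLp (k i j) 2 volume := kernelEntry_memLp hKmeas hK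
  have hkt : ∀ i j r, MemLp (fun s => k i j (r - s)) 2 volume := fun i j r =>
    (hkL i j).comp_measurePreserving (volume.measurePreserving_sub_left r)
  have hφm : AEMeasurable φ (volume.restrict (Ioc 0 T)) :=
    (hsol.1.mono Ioc_subset_Icc_self).aemeasurable measurableSet_Ioc
  have hpair : AEMeasurable (fun s => (s, φ s)) (volume.restrict (Ioc 0 T)) :=
    aemeasurable_id.prodMk hφm
  have hum : ∀ j, AEMeasurable (fun s => u s j) (volume.restrict (Ioc 0 T)) := by
    intro j
    have h1 : AEMeasurable (fun s => b s (φ s) j) (volume.restrict (Ioc 0 T)) :=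
      ((measurable_pi_apply j).comp hbmeas).comp_aemeasurable hpair
    have h2 : AEMeasurable (fun s => ∑ l, σ s (φ s) j l * v s l) (volume.restrict (Ioc 0 T)) :=
      Finset.aemeasurable_fun_sum _ fun l _ => ((hσmeas j l).comp_aemeasurable hpair).mul
        ((measurable_pi_apply l).comp hv).aemeasurable
    exact h1.add h2
  have hwle : ∀ j s, |w j s| ≤ C_L * R * ctrlWeight T v s := by
    intro j s
    by_cases hs : s ∈ Ioc 0 T
    · simp only [hw, ctrlWeight, indicator_of_mem hs]
      have hs' := Ioc_subset_Icc_self hs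
      have := euclNorm_nonneg (v s)
      calc |u s j| ≤ euclNorm (u s) := abs_le_euclNorm _ _
        _ ≤ C_L * ((1 + euclNorm (φ s)) * (1 + euclNorm (v s))) :=
            forcing_le (hgrowth s hs' _) _
        _ ≤ C_L * (R * (1 + euclNorm (v s))) := by gcongr; exact hR s hs'
        _ = _ := by ring
    · simp [hw, ctrlWeight, indicator_of_notMem hs]
  have hwL : ∀ j, MemLp (w j) 2 volume := fun j => by
    refine MemLp.of_le_mul (c := C_L * R) hp
      ((aemeasurable_indicator_iff measurableSet_Ioc).2 (hum j)).aestronglyMeasurable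
      (Eventually.of_forall fun s => ?_)
    rw [Real.norm_eq_abs, Real.norm_eq_abs, abs_of_nonneg (ctrlWeight_nonneg T v s)]
    exact hwle j s
  have hwN : ∀ j, √(∫ s, w j s ^ 2) ≤ C_L * R * √(2 * T + 2 * N) := by
    intro j
    calc √(∫ s, w j s ^ 2) ≤ √(∫ s, (C_L * R) ^ 2 * ctrlWeight T v s ^ 2) := by
          refine Real.sqrt_le_sqrt (integral_mono (hwL j).integrable_sq
            (hp.integrable_sq.const_mul _) fun s => ?_)
          show w j s ^ 2 ≤ (C_L * R) ^ 2 * ctrlWeight T v s ^ 2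
          rw [← sq_abs, ← mul_pow]
          exact pow_le_pow_left₀ (abs_nonneg _) (hwle j s) 2
      _ = C_L * R * √(∫ s, ctrlWeight T v s ^ 2) := by
          rw [integral_const_mul, Real.sqrt_mul (sq_nonneg _), Real.sqrt_sq (by positivity)]
      _ ≤ _ := by gcongr
  -- Cutting `K` off to `[0,T]` and the forcing off to `(0,T]` turns the Volterra integral over
  -- `(0,r]` into a convolution over the whole line.
  have hrep : ∀ r ∈ Icc 0 T, ∀ i, φ r i = x₀ i + ∑ j, ∫ s, k i j (r - s) * w j s := by
    intro r hr i
    obtain ⟨hI, hE⟩ := hsol.2 r hr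
    have hE' := congrFun hE i
    rw [Pi.add_apply, eval_integral (fun i => hI.eval i)] at hE'
    have hprod : ∀ j ∈ Finset.univ, Integrable (fun s => k i j (r - s) * w j s) volume :=
      fun j _ => (hkt i j r).integrable_mul (hwL j)
    rw [hE', ← integral_finsetSum _ hprod,
      ← integral_indicator measurableSet_Ioc]
    congr 2
    ext s
    by_cases hs : s ∈ Ioc 0 r
    · have h1 : s ∈ Ioc 0 T := ⟨hs.1, hs.2.trans hr.2⟩
      have h2 : r - s ∈ Icc 0 T := ⟨by linarith [hs.2], by linarith [hs.1, hr.2]⟩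
      simp [hk, hw, hu, indicator_of_mem hs, indicator_of_mem h1, indicator_of_mem h2,
        Matrix.mulVec, dotProduct]
    · rw [indicator_of_notMem hs]
      refine (Finset.sum_eq_zero fun j _ => ?_).symm
      by_cases h1 : s ∈ Ioc 0 T
      · have h2 : r - s ∉ Icc 0 T := fun h => hs ⟨h1.1, by linarith [h.1]⟩
        simp [hk, indicator_of_notMem h2]
      · simp [hw, indicator_of_notMem h1]
  have hQ : 0 ≤ C_L * R * √(2 * T + 2 * N) := by positivity
  have hcomp : ∀ i, |φ t i - φ t' i| ≤
      (∑ j, √(∫ s, (k i j (t - s) - k i j (t' - s)) ^ 2)) * (C_L * R * √(2 * T + 2 * N)) := by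
    intro i
    have : φ t i - φ t' i = ∑ j, ∫ s, (k i j (t - s) - k i j (t' - s)) * w j s := by
      rw [hrep t ht, hrep t' ht', add_sub_add_left_eq_sub, ← Finset.sum_sub_distrib]
      refine Finset.sum_congr rfl fun j _ => ?_
      simp only [sub_mul]
      exact (integral_sub ((hkt i j t).integrable_mul (hwL j))
        ((hkt i j t').integrable_mul (hwL j))).symm
    rw [this, Finset.sum_mul]
    refine (Finset.abs_sum_le_sum_abs _ _).trans (Finset.sum_le_sum fun j _ => ?_)
    refine (abs_integral_mul_le_sqrt ((hkt i j t).sub (hkt i j t')) (hwL j)).trans ?_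
    exact mul_le_mul_of_nonneg_left (hwN j) (Real.sqrt_nonneg _)
  refine (pi_norm_le_iff_of_nonneg (mul_nonneg (Finset.sum_nonneg fun i _ =>
    Finset.sum_nonneg fun j _ => Real.sqrt_nonneg _) hQ)).2 fun i => (hcomp i).trans ?_
  refine mul_le_mul_of_nonneg_right ?_ hQ
  exact Finset.single_le_sum
    (f := fun i => ∑ j, √(∫ s, (k i j (t - s) - k i j (t' - s)) ^ 2))
    (fun i _ => Finset.sum_nonneg fun j _ => Real.sqrt_nonneg _) (Finset.mem_univ i)

/-- Arzelà–Ascoli for a family with a common bound and a common modulus of continuity, transferred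
from bounded continuous functions. -/
lemma isCompact_closure_of_modulus {T : ℝ} {d : ℕ} {S : Set C(Icc (0:ℝ) T, Fin d → ℝ)} {R : ℝ}
    {ω : ℝ → ℝ → ℝ} (hω : ∀ t₀, Tendsto (fun t => ω t t₀) (𝓝 t₀) (𝓝 0))
    (hR : ∀ Φ ∈ S, ∀ x, ‖Φ x‖ ≤ R) (hS : ∀ Φ ∈ S, ∀ x y, ‖Φ x - Φ y‖ ≤ ω x y) :
    IsCompact (closure S) := by
  let e := (ContinuousMap.isometryEquivBoundedOfCompact (Icc (0:ℝ) T) (Fin d → ℝ)).toHomeomorph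
  rw [← e.isCompact_image, e.image_closure]
  refine BoundedContinuousFunction.arzela_ascoli (Metric.closedBall 0 R)
    (isCompact_closedBall 0 R) (e '' S) ?_ ?_
  · rintro _ x ⟨Φ, hΦ, rfl⟩
    simpa using! hR Φ hΦ x
  · intro x₀
    rw [Metric.equicontinuousAt_iff_right]
    intro ε hε
    have hlim : Tendsto (fun x : Icc (0:ℝ) T => ω x x₀) (𝓝 x₀) (𝓝 0) :=
      (hω x₀).comp continuous_subtype_val.continuousAt
    filter_upwards [hlim.eventually_lt_const hε] with x hx
    rintro ⟨_, Φ, hΦ, rfl⟩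
    rw [dist_comm, dist_eq_norm]
    exact (hS Φ hΦ x x₀).trans_lt hx

/-! ### Relative compactness -/

/-- **Relative compactness of the set of controlled Volterra solutions.**
Under Assumption (K) and linear growth of the coefficients, the set of all continuous
paths on `[0,T]` solving the controlled Volterra equation for some control of energy at
most `N` is relatively compact in `C([0,T];ℝᵈ)` with the supremum norm. -/
theorem controlled_volterra_relatively_compact
    (d m : ℕ) (T : ℝ) (hT : 0 < T)
    (γ : ℝ) (hγ : γ ∈ Ioc (0:ℝ) 2)
    (K : ℝ → Matrix (Fin d) (Fin d) ℝ)
    (hKmeas : ∀ i j, Measurable fun t => K t i j)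
    (hK : AssumptionK T γ K)
    (x₀ : Fin d → ℝ)
    (b : ℝ → (Fin d → ℝ) → Fin d → ℝ)
    (σ : ℝ → (Fin d → ℝ) → Matrix (Fin d) (Fin m) ℝ)
    (hbmeas : Measurable (Function.uncurry b))
    (hσmeas : ∀ i j, Measurable fun p : ℝ × (Fin d → ℝ) => σ p.1 p.2 i j)
    (C_L : ℝ) (hCL : 0 < C_L)
    (hgrowth : ∀ t ∈ Icc (0:ℝ) T, ∀ x,
      euclNorm (b t x) + frobNorm (σ t x) ≤ C_L * (1 + euclNorm x))
    (N : ℝ) (hN : 0 < N) :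
    IsCompact (closure
      {Φ : ContinuousMap (Icc (0:ℝ) T) (Fin d → ℝ) |
        ∃ (φ : ℝ → Fin d → ℝ) (v : ℝ → Fin m → ℝ),
          Measurable v ∧
          IntegrableOn (fun s => euclNorm (v s) ^ 2) (Ioc 0 T) ∧
          (∫ s in Ioc 0 T, euclNorm (v s) ^ 2) ≤ N ∧
          IsCtrlSol T K x₀ b σ v φ ∧
          ∀ x : Icc (0:ℝ) T, Φ x = φ ↑x}) := by
  have hK2 := hK.1
  obtain ⟨R, hR⟩ := exists_solution_bound (m := m) hT.le hKmeas hK2 x₀ hCL.le hgrowth N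
  refine isCompact_closure_of_modulus (R := R)
    (ω := fun t t' => kernelModulus T K t t' * (C_L * R * √(2 * T + 2 * N)))
    (fun t₀ => ?_) ?_ ?_
  · simpa using (tendsto_kernelModulus hKmeas hK2 t₀).mul_const (C_L * R * √(2 * T + 2 * N))
  · rintro Φ ⟨φ, v, hv, hvi, hvN, hsol, hΦ⟩ x
    rw [hΦ x]
    linarith [norm_le_euclNorm (φ x), hR φ v hv hvi hvN hsol x x.2]
  · rintro Φ ⟨φ, v, hv, hvi, hvN, hsol, hΦ⟩ x y
    rw [hΦ x, hΦ y]
    exact solution_modulus hT.le hKmeas hK2 hbmeas hσmeas hCL.le hgrowth hv hvi hvN hsol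
      (hR φ v hv hvi hvN hsol) x.2 y.2
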